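/- For every positive integer n and every divisor k of n, the quantity Y[n,k] = ∑_{d|n} c_k(n/d)·c_d(n/d) is a nonnegative real number. -/

import Mathlib

/-- The Ramanujan sum `c_d(r)`: the sum of the `r`-th powers of all primitive
`d`-th roots of unity. -/
noncomputable def ramanujanSum (d r : ℕ) : ℂ :=
  ∑ m ∈ (Finset.range d).filter (fun m => Nat.gcd m d = 1),
    Complex.exp (2 * Real.pi * Complex.I * ((m : ℂ) * (r : ℂ) / (d : ℂ)))

/-- `Y[n,k] = ∑_{d ∣ n} c_k(n/d) · c_d(n/d)`. -/
noncomputable def Y (n k : ℕ) : ℂ :=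
  ∑ d ∈ n.divisors, ramanujanSum k (n / d) * ramanujanSum d (n / d)

open ArithmeticFunction

/-!
Fix `n` and put `F g = ∑_{k ∣ g} Y[n,k]` for `g ∣ n`, so that `Y[n,·]` is the Möbius inverse of `F`.
Since `∑_{k ∣ g} c_k(r)` is `g` if `g ∣ r` and `0` otherwise, `F` involves only one Ramanujan sum at
a time: `F g = g ∑_{d ∣ n/g} c_d(n/d)`.

The sums `c_d(r)` are multiplicative in `d` and depend on `r` only through `gcd(d, r)`, so `Y[n,k]`
is multiplicative in the pair `(n, k)`, and it suffices to treat `n = p ^ a`. There the sum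
telescopes and `F (p ^ i)` is a natural number, nondecreasing in `i`; hence its value `Y[p^a, 1]` at
`i = 0` and its successive differences `Y[p^a, p^(i+1)]` are nonnegative.
-/

lemma sum_nthRootsFinset_pow {R : Type*} [CommRing R] [IsDomain R] {ζ : R} {n : ℕ}
    (hζ : IsPrimitiveRoot ζ n) (r : ℕ) :
    ∑ z ∈ Polynomial.nthRootsFinset n (1 : R), z ^ r = if n ∣ r then (n : R) else 0 := by
  classical
  have sum_eq_geom : ∑ z ∈ Polynomial.nthRootsFinset n (1 : R), z ^ r =
      ∑ m ∈ Finset.range n, (ζ ^ r) ^ m := by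
    rw [Polynomial.nthRootsFinset, ← Multiset.toFinset_eq hζ.nthRoots_one_nodup]
    simp [Finset.sum, hζ.nthRoots_eq (one_pow n), ← pow_mul, mul_comm r]
  rw [sum_eq_geom]
  split_ifs with hr
  · simp [(hζ.pow_eq_one_iff_dvd r).2 hr]
  · have geom : (∑ m ∈ Finset.range n, (ζ ^ r) ^ m) * (ζ ^ r - 1) = 0 := by
      rw [geom_sum_mul, pow_right_comm, hζ.pow_eq_one, one_pow, sub_self]
    exact (mul_eq_zero.1 geom).resolve_right
      (sub_ne_zero.2 fun h ↦ hr ((hζ.pow_eq_one_iff_dvd r).1 h))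

lemma sum_divisors_mul_of_coprime {M : Type*} [AddCommMonoid M] {a b : ℕ} (hab : a.Coprime b)
    (f : ℕ → M) :
    ∑ d ∈ (a * b).divisors, f d = ∑ d ∈ a.divisors, ∑ e ∈ b.divisors, f (d * e) := by
  rw [Nat.divisors_mul, Finset.mul_def, Finset.sum_image hab.mul_injOn_divisors,
    Finset.sum_product]

lemma ramanujanSum_eq_sum_primitiveRoots (d r : ℕ) :
    ramanujanSum d r = ∑ z ∈ primitiveRoots d ℂ, z ^ r := by
  rcases eq_or_ne d 0 with rfl | hd
  · simp [ramanujanSum]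
  have hd' : 0 < d := hd.bot_lt
  have hζ := Complex.isPrimitiveRoot_exp d hd
  have exp_eq_pow (m : ℕ) : Complex.exp (2 * Real.pi * Complex.I / d) ^ m =
      Complex.exp (2 * Real.pi * Complex.I * (m / d)) := by
    rw [← Complex.exp_nat_mul]
    congr 1
    ring
  refine Finset.sum_bij (fun m _ ↦ Complex.exp (2 * Real.pi * Complex.I / d) ^ m) ?_ ?_ ?_ ?_
  · intro m hm
    rw [Finset.mem_filter] at hm
    exact (mem_primitiveRoots hd').2 (hζ.pow_of_coprime m hm.2)
  · intro m hm m' hm' h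
    simp only [Finset.mem_filter, Finset.mem_range] at hm hm'
    exact hζ.pow_inj hm.1 hm'.1 h
  · intro z hz
    obtain ⟨m, hmd, hm, rfl⟩ := (Complex.isPrimitiveRoot_iff z d hd).1
      ((mem_primitiveRoots hd').1 hz)
    exact ⟨m, by simp [hmd, hm.gcd_eq_one], exp_eq_pow m⟩
  · intro m _
    rw [exp_eq_pow, ← Complex.exp_nat_mul]
    congr 1
    ring

lemma sum_divisors_ramanujanSum (n r : ℕ) :
    ∑ d ∈ n.divisors, ramanujanSum d r = if n ∣ r then (n : ℂ) else 0 := by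
  rcases eq_or_ne n 0 with rfl | hn
  · simp
  rw [← sum_nthRootsFinset_pow (Complex.isPrimitiveRoot_exp n hn),
    IsPrimitiveRoot.nthRoots_one_eq_biUnion_primitiveRoots,
    Finset.sum_biUnion fun _ _ _ _ h ↦ IsPrimitiveRoot.disjoint h]
  simp only [ramanujanSum_eq_sum_primitiveRoots]

/-- The arithmetic function `d ↦ c_d(r)`. -/
noncomputable def ramanujanFunction (r : ℕ) : ArithmeticFunction ℂ :=
  ⟨fun d ↦ ramanujanSum d r, by simp [ramanujanSum]⟩

/-- The arithmetic function that is the identity on the divisors of `r` and `0` elsewhere: the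
sum function of `d ↦ c_d(r)`. -/
def idOnDivisors (R : Type*) [AddMonoidWithOne R] (r : ℕ) : ArithmeticFunction R :=
  ⟨fun d ↦ if d ∣ r then (d : R) else 0, by simp⟩

lemma isMultiplicative_idOnDivisors (R : Type*) [Semiring R] (r : ℕ) :
    (idOnDivisors R r).IsMultiplicative := by
  refine ⟨by simp [idOnDivisors], fun {m n} hmn ↦ ?_⟩
  have mul_dvd_iff : m * n ∣ r ↔ m ∣ r ∧ n ∣ r :=
    ⟨fun h ↦ ⟨dvd_of_mul_right_dvd h, dvd_of_mul_left_dvd h⟩,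
      fun h ↦ hmn.mul_dvd_of_dvd_of_dvd h.1 h.2⟩
  by_cases hm : m ∣ r <;> by_cases hn : n ∣ r <;> simp [idOnDivisors, mul_dvd_iff, hm, hn]

lemma ramanujanFunction_eq_mul_moebius (r : ℕ) :
    ramanujanFunction r = idOnDivisors ℂ r * (moebius : ArithmeticFunction ℂ) := by
  have mul_zeta : ramanujanFunction r * (zeta : ArithmeticFunction ℂ) = idOnDivisors ℂ r := by
    ext n
    rw [coe_mul_zeta_apply]
    exact sum_divisors_ramanujanSum n r
  rw [← mul_zeta, mul_assoc, coe_zeta_mul_coe_moebius, mul_one]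

lemma ramanujanSum_mul_of_coprime {a b : ℕ} (hab : a.Coprime b) (r : ℕ) :
    ramanujanSum (a * b) r = ramanujanSum a r * ramanujanSum b r := by
  have hr : (ramanujanFunction r).IsMultiplicative := by
    rw [ramanujanFunction_eq_mul_moebius]
    exact (isMultiplicative_idOnDivisors ℂ r).mul isMultiplicative_moebius.intCast
  exact hr.map_mul_of_coprime hab

lemma ramanujanSum_congr_gcd {k r s : ℕ} (h : k.gcd r = k.gcd s) :
    ramanujanSum k r = ramanujanSum k s := by
  change ramanujanFunction r k = ramanujanFunction s k
  simp only [ramanujanFunction_eq_mul_moebius, mul_apply]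
  refine Finset.sum_congr rfl fun x hx ↦ ?_
  have hxk : x.1 ∣ k := Dvd.intro _ (Nat.mem_divisorsAntidiagonal.1 hx).1
  have dvd_iff : x.1 ∣ r ↔ x.1 ∣ s := by
    simpa [Nat.dvd_gcd_iff, hxk] using congrArg (x.1 ∣ ·) h
  simp only [idOnDivisors, coe_mk, dvd_iff]

lemma ramanujanSum_mul_mul_of_coprime {d e r s : ℕ} (hde : d.Coprime e) (hds : d.Coprime s)
    (hre : r.Coprime e) :
    ramanujanSum (d * e) (r * s) = ramanujanSum d r * ramanujanSum e s := by
  rw [ramanujanSum_mul_of_coprime hde,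
    ramanujanSum_congr_gcd (hds.symm.gcd_mul_right_cancel_right r),
    ramanujanSum_congr_gcd (hre.gcd_mul_left_cancel_right s)]

lemma Y_mul_of_coprime {a b k l : ℕ} (hab : a.Coprime b) (hk : k ∣ a) (hl : l ∣ b) :
    Y (a * b) (k * l) = Y a k * Y b l := by
  simp only [Y, sum_divisors_mul_of_coprime hab, Finset.sum_mul_sum]
  refine Finset.sum_congr rfl fun d hd ↦ Finset.sum_congr rfl fun e he ↦ ?_
  have hda := Nat.dvd_of_mem_divisors hd
  have heb := Nat.dvd_of_mem_divisors he
  have hda' := Nat.div_dvd_of_dvd hda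
  have heb' := Nat.div_dvd_of_dvd heb
  rw [Nat.mul_div_mul_comm hda heb,
    ramanujanSum_mul_mul_of_coprime (hab.of_dvd hk hl) (hab.of_dvd hk heb') (hab.of_dvd hda' hl),
    ramanujanSum_mul_mul_of_coprime (hab.of_dvd hda heb) (hab.of_dvd hda heb')
      (hab.of_dvd hda' heb),
    mul_mul_mul_comm]

lemma sum_divisors_Y {n g : ℕ} (hg : g ∣ n) :
    ∑ k ∈ g.divisors, Y n k = g * ∑ d ∈ (n / g).divisors, ramanujanSum d (n / d) := by
  rcases eq_or_ne n 0 with rfl | hn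
  · simp [Y]
  have divisors_div : (n / g).divisors = {d ∈ n.divisors | g ∣ n / d} := by
    ext d
    simp only [Nat.mem_divisors, Finset.mem_filter]
    constructor
    · rintro ⟨hd, -⟩
      have hdn := hd.trans (Nat.div_dvd_of_dvd hg)
      exact ⟨⟨hdn, hn⟩, (Nat.dvd_div_iff_mul_dvd hdn).2
        (mul_comm g d ▸ (Nat.dvd_div_iff_mul_dvd hg).1 hd)⟩
    · rintro ⟨⟨hdn, -⟩, hd⟩
      exact ⟨(Nat.dvd_div_iff_mul_dvd hg).2 (mul_comm d g ▸ (Nat.dvd_div_iff_mul_dvd hdn).1 hd),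
        (Nat.div_ne_zero_iff_of_dvd hg).2 ⟨hn, ne_zero_of_dvd_ne_zero hn hg⟩⟩
  simp only [Y]
  rw [Finset.sum_comm, divisors_div, Finset.sum_filter, Finset.mul_sum]
  refine Finset.sum_congr rfl fun d _ ↦ ?_
  rw [← Finset.sum_mul, sum_divisors_ramanujanSum]
  split_ifs <;> simp

lemma sum_divisors_prime_pow_succ {M : Type*} [AddCommMonoid M] {p : ℕ} (hp : p.Prime) (i : ℕ)
    (f : ℕ → M) :
    ∑ d ∈ (p ^ (i + 1)).divisors, f d = ∑ d ∈ (p ^ i).divisors, f d + f (p ^ (i + 1)) := by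
  simp only [Nat.sum_divisors_prime_pow hp, Finset.sum_range_succ _ (i + 1)]

lemma ramanujanSum_prime_pow_succ {p : ℕ} (hp : p.Prime) (j r : ℕ) :
    ramanujanSum (p ^ (j + 1)) r =
      (if p ^ (j + 1) ∣ r then (p : ℂ) ^ (j + 1) else 0) -
        (if p ^ j ∣ r then (p : ℂ) ^ j else 0) := by
  have h := sum_divisors_prime_pow_succ hp j (ramanujanSum · r)
  simp only [sum_divisors_ramanujanSum, Nat.cast_pow] at h
  exact eq_sub_of_add_eq' h.symm

lemma sum_divisors_ramanujanSum_prime_pow_div {p : ℕ} (hp : p.Prime) {a j : ℕ} (hj : j ≤ a) :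
    ∑ d ∈ (p ^ j).divisors, ramanujanSum d (p ^ a / d) =
      if 2 * j ≤ a then (p : ℂ) ^ j else if Even a then (p : ℂ) ^ (a / 2) else 0 := by
  induction j with
  | zero => simp [ramanujanSum]
  | succ j ih =>
    rw [sum_divisors_prime_pow_succ hp, ih (by omega), Nat.pow_div hj hp.pos,
      ramanujanSum_prime_pow_succ hp]
    simp only [Nat.pow_dvd_pow_iff_le_right hp.one_lt]
    obtain h | rfl | rfl | h : 2 * j + 2 ≤ a ∨ a = 2 * j + 1 ∨ a = 2 * j ∨ a < 2 * j := by omega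
    · rw [if_pos (by omega), if_pos (by omega), if_pos (by omega), if_pos (by omega),
        add_sub_cancel]
    · rw [if_pos (by omega), if_neg (by omega), if_pos (by omega), if_neg (by omega),
        if_neg (by simp), zero_sub, add_neg_cancel]
    · rw [if_pos le_rfl, if_neg (by omega), if_neg (by omega), if_neg (by omega),
        if_pos (by simp), Nat.mul_div_cancel_left j two_pos, sub_zero, add_zero]
    · rw [if_neg (by omega : ¬ 2 * j ≤ a), if_neg (by omega : ¬ j + 1 ≤ a - (j + 1)),
        if_neg (by omega : ¬ j ≤ a - (j + 1)), if_neg (by omega : ¬ 2 * (j + 1) ≤ a),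
        sub_zero, add_zero]

/-- The value of `∑_{k ∣ p ^ i} Y[p ^ a, k]` for a prime `p` and `i ≤ a`. -/
def cumulativeY (p a i : ℕ) : ℕ :=
  if a ≤ 2 * i then p ^ a else if Even a then p ^ (i + a / 2) else 0

lemma cumulativeY_monotone {p : ℕ} (hp : 0 < p) (a : ℕ) : Monotone (cumulativeY p a) := by
  intro i j hij
  unfold cumulativeY
  split_ifs <;> first | omega | exact Nat.zero_le _ | exact Nat.pow_le_pow_right hp (by omega)

lemma sum_divisors_Y_prime_pow {p : ℕ} (hp : p.Prime) {a i : ℕ} (hi : i ≤ a) :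
    ∑ k ∈ (p ^ i).divisors, Y (p ^ a) k = cumulativeY p a i := by
  rw [sum_divisors_Y (pow_dvd_pow p hi), Nat.pow_div hi hp.pos,
    sum_divisors_ramanujanSum_prime_pow_div hp (Nat.sub_le a i), cumulativeY]
  have le_iff : 2 * (a - i) ≤ a ↔ a ≤ 2 * i := by omega
  simp only [le_iff]
  split_ifs <;> simp [← pow_add, Nat.add_sub_cancel' hi]

open scoped ComplexOrder

lemma Y_prime_pow_nonneg {p : ℕ} (hp : p.Prime) {a i : ℕ} (hi : i ≤ a) :
    0 ≤ Y (p ^ a) (p ^ i) := by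
  cases i with
  | zero =>
    have h := sum_divisors_Y_prime_pow hp hi
    rw [pow_zero, Nat.divisors_one, Finset.sum_singleton] at h
    rw [pow_zero, h]
    exact Nat.cast_nonneg _
  | succ i =>
    have h := sum_divisors_prime_pow_succ hp i (Y (p ^ a))
    rw [sum_divisors_Y_prime_pow hp hi, sum_divisors_Y_prime_pow hp (by omega)] at h
    rw [eq_sub_of_add_eq' h.symm, sub_nonneg, Nat.cast_le]
    exact cumulativeY_monotone hp.pos a i.le_succ

theorem stmt_17 (n : ℕ) (hn : 0 < n) (k : ℕ) (hk : k ∣ n) :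
    0 ≤ (Y n k).re ∧ (Y n k).im = 0 := by
  suffices Y_nonneg : 0 ≤ Y n k from ⟨(Complex.nonneg_iff.1 Y_nonneg).1,
    (Complex.nonneg_iff.1 Y_nonneg).2.symm⟩
  induction n using Nat.recOnPrimeCoprime generalizing k with
  | zero => exact absurd hn (lt_irrefl 0)
  | prime_pow p a hp =>
    obtain ⟨i, hi, rfl⟩ := (Nat.dvd_prime_pow hp).1 hk
    exact Y_prime_pow_nonneg hp hi
  | coprime a b ha hb hab iha ihb =>
    obtain ⟨k, l, hka, hlb, rfl⟩ := Nat.dvd_mul.1 hk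
    rw [Y_mul_of_coprime hab hka hlb]
    exact mul_nonneg (iha (by omega) k hka) (ihb (by omega) l hlb)
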